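/- Properties of the scan indices: for every z ∈ {1,…,m−1}, (i) for all x ∈ [x_z, z], d_F(τ_{x,z}, P[t_x, t_z]) ≤ 4Δ, and for all y ∈ [z+1, y_z], d_F(τ_{z+1,y}, P[t_{z+1}, t_y]) ≤ 4Δ; (ii) for all x with 1 ≤ x < x_z, d_F(τ_{x,z}, P[t_x, t_z]) > 2Δ, and for all y with y_z < y ≤ m, d_F(τ_{z+1,y}, P[t_{z+1}, t_y]) > 2Δ. -/

import Mathlib

/-!
The whole statement rests on one fact: if a segment joining the endpoints of a curve is within
Fréchet distance `r` of that curve, then for every subcurve the segment joining the endpoints of the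
subcurve is within `2r` of it (`frechetDist_shortcut_mono`). A near-optimal matching sends the
subcurve to a subsegment `σ` of the original segment, at distance about `r`. In particular the
endpoints of `σ` are at distance about `r` from those of the subcurve, so by convexity the new segment is
within about `r` of `σ` when both are parametrized linearly, and the triangle inequality gives `2r`.

Consequently, if `d_F(τ_{x,z}, P[t_x,t_z]) ≤ 2Δ` for some `x < x_z`, then the bound `4Δ` holds for
all `x' ∈ [x,z]`, which contradicts the minimality of `x_z`; the case of `y_z` is symmetric.
-/

open Set

noncomputable section

/-- Points in `ℝ^d`. -/
abbrev Pt (d : ℕ) : Type := EuclideanSpace ℝ (Fin d)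

/-- A reparametrization: a continuous strictly increasing bijection of `[0,1]` onto itself. -/
def IsReparam (γ : ℝ → ℝ) : Prop :=
  ContinuousOn γ (Icc 0 1) ∧ StrictMonoOn γ (Icc 0 1) ∧ γ '' Icc 0 1 = Icc 0 1

/-- The Fréchet distance `d_F(P,Q) = inf_γ sup_{t ∈ [0,1]} ‖P(γ(t)) - Q(t)‖`
(only the values of the curves on `[0,1]` are relevant). -/
def frechetDist {d : ℕ} (P Q : ℝ → Pt d) : ℝ :=
  ⨅ γ : {γ : ℝ → ℝ // IsReparam γ}, ⨆ s : Icc (0:ℝ) 1, ‖P (γ.1 s.1) - Q s.1‖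

/-- The linearly parametrized line segment from `a` to `b`. -/
def seg {d : ℕ} (a b : Pt d) : ℝ → Pt d := fun s => (1 - s) • a + s • b

/-- The subcurve `P[a,b]` of `P`, linearly reparametrized over `[0,1]`. -/
def subcurve {d : ℕ} (P : ℝ → Pt d) (a b : ℝ) : ℝ → Pt d := fun s => P (a + s * (b - a))

/-- The polygonal curve with vertex sequence `pts 0, …, pts n`, uniformly
parametrized over `[0,1]`. -/
def polyline {d n : ℕ} (pts : Fin (n + 1) → Pt d) : ℝ → Pt d := fun s =>
  if h : n = 0 then pts 0
  else
    let i : ℕ := min ⌊s * n⌋₊ (n - 1)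
    have hi : i < n := lt_of_le_of_lt (min_le_right _ _) (by omega)
    (1 - (s * n - i)) • pts ⟨i, hi.trans n.lt_succ_self⟩ +
      (s * n - i) • pts ⟨i + 1, Nat.succ_lt_succ hi⟩

/-- `f ∈ 𝕏^d_ℓ`: `f` is a polygonal curve with at most `ℓ` vertices. -/
def IsPolygonal {d : ℕ} (f : ℝ → Pt d) (ℓ : ℕ) : Prop :=
  ∃ n : ℕ, n + 1 ≤ ℓ ∧ ∃ pts : Fin (n + 1) → Pt d, f = polyline pts

/-- Concatenation of two curves (each parametrized over `[0,1]`). -/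
def concat {d : ℕ} (f g : ℝ → Pt d) : ℝ → Pt d := fun s =>
  if s ≤ 1 / 2 then f (2 * s) else g (2 * s - 1)

/-- `CostLE P m t C Δ` states that the clustering cost satisfies `φ(P,C) ≤ Δ`:
there is a family `I` of index pairs `(i,j)`, `1 ≤ i < j ≤ m`, with
`⋃_{(i,j) ∈ I} [t i, t j] = [0,1]`, such that every corresponding subcurve is
within Fréchet distance `Δ` of some center in `C`. -/
def CostLE {d : ℕ} (P : ℝ → Pt d) (m : ℕ) (t : ℕ → ℝ) (C : Set (ℝ → Pt d)) (Δ : ℝ) : Prop :=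
  ∃ I : Set (ℕ × ℕ),
    (∀ q ∈ I, 1 ≤ q.1 ∧ q.1 < q.2 ∧ q.2 ≤ m) ∧
    (⋃ q ∈ I, Icc (t q.1) (t q.2)) = Icc (0:ℝ) 1 ∧
    ∀ q ∈ I, ∃ c ∈ C, frechetDist (subcurve P (t q.1) (t q.2)) c ≤ Δ

/-- The set `r_Q` of the set system `R` (ground set `{1,…,m−1}`):
`r_Q = {z : ∃ i ≤ z < j, d_F(Q, P[t_i,t_j]) ≤ Δ}`. -/
def rSet {d : ℕ} (P : ℝ → Pt d) (m : ℕ) (t : ℕ → ℝ) (Δ : ℝ) (Q : ℝ → Pt d) : Set ℕ :=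
  {z | 1 ≤ z ∧ z < m ∧ ∃ i j, 1 ≤ i ∧ i ≤ z ∧ z < j ∧ j ≤ m ∧
    frechetDist Q (subcurve P (t i) (t j)) ≤ Δ}

theorem isReparam_of_endpoints {f : ℝ → ℝ} (hc : ContinuousOn f (Icc 0 1))
    (hm : StrictMonoOn f (Icc 0 1)) (h0 : f 0 = 0) (h1 : f 1 = 1) : IsReparam f := by
  refine ⟨hc, hm, Subset.antisymm ?_ ?_⟩
  · rintro _ ⟨s, hs, rfl⟩
    constructor
    · rw [← h0]; exact hm.monotoneOn (by simp) hs hs.1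
    · rw [← h1]; exact hm.monotoneOn hs (by simp) hs.2
  · have := intermediate_value_Icc (zero_le_one' ℝ) hc
    rwa [h0, h1] at this

theorem isReparam_id : IsReparam id :=
  isReparam_of_endpoints continuousOn_id strictMonoOn_id rfl rfl

theorem frechetDist_le_of_forall {d : ℕ} {P Q : ℝ → Pt d} {γ : ℝ → ℝ} (hγ : IsReparam γ) {R : ℝ}
    (h : ∀ s ∈ Icc (0:ℝ) 1, ‖P (γ s) - Q s‖ ≤ R) : frechetDist P Q ≤ R := by
  have hbdd : BddBelow (range fun γ : {γ : ℝ → ℝ // IsReparam γ} =>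
      ⨆ s : Icc (0:ℝ) 1, ‖P (γ.1 s.1) - Q s.1‖) :=
    ⟨0, by rintro _ ⟨γ, rfl⟩; exact Real.iSup_nonneg fun _ => norm_nonneg _⟩
  have : Nonempty (Icc (0:ℝ) 1) := ⟨⟨0, by simp⟩⟩
  exact (ciInf_le hbdd ⟨γ, hγ⟩).trans (ciSup_le fun s => h s.1 s.2)

theorem frechetDist_nonneg {d : ℕ} (P Q : ℝ → Pt d) : 0 ≤ frechetDist P Q :=
  Real.iInf_nonneg fun _ => Real.iSup_nonneg fun _ => norm_nonneg _

/-- Continuity ensures that the supremum in `frechetDist` is that of a bounded family, so that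
it really bounds each pointwise distance. -/
theorem exists_reparam_of_frechetDist_lt {d : ℕ} {P Q : ℝ → Pt d}
    (hP : ContinuousOn P (Icc 0 1)) (hQ : ContinuousOn Q (Icc 0 1)) {R : ℝ}
    (h : frechetDist P Q < R) :
    ∃ γ, IsReparam γ ∧ ∀ s ∈ Icc (0:ℝ) 1, ‖P (γ s) - Q s‖ ≤ R := by
  have : Nonempty {γ : ℝ → ℝ // IsReparam γ} := ⟨⟨id, isReparam_id⟩⟩
  obtain ⟨⟨γ, hγ⟩, hlt⟩ := exists_lt_of_ciInf_lt h
  refine ⟨γ, hγ, fun s hs => ?_⟩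
  have hmaps : MapsTo γ (Icc 0 1) (Icc 0 1) := fun u hu => hγ.2.2 ▸ mem_image_of_mem γ hu
  have hcont : ContinuousOn (fun s => ‖P (γ s) - Q s‖) (Icc 0 1) :=
    ((hP.comp hγ.1 hmaps).sub hQ).norm
  have hbdd : BddAbove (range fun s : Icc (0:ℝ) 1 => ‖P (γ s.1) - Q s.1‖) := by
    refine (isCompact_Icc.bddAbove_image hcont).mono ?_
    rintro _ ⟨u, rfl⟩
    exact ⟨u.1, u.2, rfl⟩
  exact (le_ciSup hbdd ⟨s, hs⟩).trans hlt.le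

/-- The endpoint-to-endpoint segment of a subcurve is at most twice as far from the subcurve as
the corresponding segment of the whole curve is from the whole curve. -/
theorem frechetDist_shortcut_mono {d : ℕ} {P : ℝ → Pt d} (hP : ContinuousOn P (Icc 0 1))
    {a a' b' b r : ℝ} (h0 : 0 ≤ a) (haa : a ≤ a') (hab : a' ≤ b') (hbb : b' ≤ b) (h1 : b ≤ 1)
    (h : frechetDist (seg (P a) (P b)) (subcurve P a b) ≤ r) :
    frechetDist (seg (P a') (P b')) (subcurve P a' b') ≤ 2 * r := by
  have hr : 0 ≤ r := (frechetDist_nonneg _ _).trans h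
  rcases hab.eq_or_lt with rfl | hab
  · -- a one-point subcurve coincides with its segment
    refine frechetDist_le_of_forall isReparam_id fun s _ => ?_
    have : seg (P a') (P a') (id s) - subcurve P a' a' s = 0 := by
      simp [seg, subcurve, ← add_smul]
    rw [this, norm_zero]; positivity
  have hba : 0 < b - a := by linarith
  refine le_of_forall_pos_le_add fun ε hε => ?_
  have hseg : ContinuousOn (seg (P a) (P b)) (Icc 0 1) := by
    unfold seg; fun_prop
  have hsub : ContinuousOn (subcurve P a b) (Icc 0 1) := by
    refine hP.comp (f := fun s => a + s * (b - a)) (by fun_prop) fun s hs => ⟨?_, ?_⟩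
    · nlinarith [mul_nonneg hs.1 hba.le]
    · nlinarith [mul_nonneg (sub_nonneg.2 hs.2) hba.le]
  obtain ⟨γ, hγ, hR⟩ := exists_reparam_of_frechetDist_lt hseg hsub
    (show frechetDist (seg (P a) (P b)) (subcurve P a b) < r + ε / 2 by linarith)
  -- `[s₁, s₂]` is the parameter interval of the subcurve inside `P[a,b]`
  obtain ⟨s₁, hs₁⟩ : ∃ s₁, s₁ * (b - a) = a' - a := ⟨(a' - a) / (b - a), by field_simp⟩
  obtain ⟨s₂, hs₂⟩ : ∃ s₂, s₂ * (b - a) = b' - a := ⟨(b' - a) / (b - a), by field_simp⟩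
  have h01 : 0 ≤ s₁ := nonneg_of_mul_nonneg_left (by linarith) hba
  have h12 : s₁ < s₂ := lt_of_mul_lt_mul_right (by linarith) hba.le
  have h21 : s₂ ≤ 1 := le_of_mul_le_mul_right (by linarith) hba
  have m₁ : s₁ ∈ Icc (0:ℝ) 1 := ⟨h01, by linarith⟩
  have m₂ : s₂ ∈ Icc (0:ℝ) 1 := ⟨by linarith, h21⟩
  have hD : 0 < γ s₂ - γ s₁ := sub_pos.2 (hγ.2.1 m₁ m₂ h12)
  have hmaps : MapsTo (fun u => s₁ + u * (s₂ - s₁)) (Icc 0 1) (Icc 0 1) := by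
    intro u hu
    constructor
    · nlinarith [mul_nonneg hu.1 (sub_pos.2 h12).le]
    · nlinarith [mul_nonneg (sub_nonneg.2 hu.2) (sub_pos.2 h12).le]
  -- the restriction of `γ` to `[s₁, s₂]`, rescaled affinely to `[0,1]`
  have hγ' : IsReparam fun u => (γ (s₁ + u * (s₂ - s₁)) - γ s₁) / (γ s₂ - γ s₁) := by
    refine isReparam_of_endpoints ?_ ?_ (by simp) ?_
    · exact ((hγ.1.comp (by fun_prop) hmaps).sub continuousOn_const).div_const _
    · intro u hu v hv huv
      have := hγ.2.1 (hmaps hu) (hmaps hv)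
        (by nlinarith [mul_pos (sub_pos.2 huv) (sub_pos.2 h12)])
      simp only
      gcongr
    · simp only [one_mul, add_sub_cancel]
      exact div_self hD.ne'
  refine frechetDist_le_of_forall hγ' fun u hu => ?_
  have hmem : (γ (s₁ + u * (s₂ - s₁)) - γ s₁) / (γ s₂ - γ s₁) ∈ Icc (0:ℝ) 1 := by
    rw [← hγ'.2.2]; exact ⟨u, hu, rfl⟩
  have hg : (γ (s₁ + u * (s₂ - s₁)) - γ s₁) / (γ s₂ - γ s₁) * (γ s₂ - γ s₁)
      = γ (s₁ + u * (s₂ - s₁)) - γ s₁ := by field_simp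
  generalize (γ (s₁ + u * (s₂ - s₁)) - γ s₁) / (γ s₂ - γ s₁) = g at hmem hg ⊢
  have e₁ := hR s₁ m₁
  have e₂ := hR s₂ m₂
  have e := hR _ (hmaps hu)
  have c₁ : subcurve P a b s₁ = P a' := by simp only [subcurve]; congr 1; linarith
  have c₂ : subcurve P a b s₂ = P b' := by simp only [subcurve]; congr 1; linarith
  have c : subcurve P a b (s₁ + u * (s₂ - s₁)) = subcurve P a' b' u := by
    simp only [subcurve]; congr 1; linear_combination (1 - u) * hs₁ + u * hs₂
  rw [c₁] at e₁
  rw [c₂] at e₂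
  simp only [c] at e
  -- a segment is affine, so its value at `γ s` is the `g`-interpolation of its values at
  -- `γ s₁` and `γ s₂`
  have hv : γ (s₁ + u * (s₂ - s₁)) = (1 - g) * γ s₁ + g * γ s₂ := by linear_combination -hg
  have key : seg (P a') (P b') g - subcurve P a' b' u
      = (seg (P a) (P b) (γ (s₁ + u * (s₂ - s₁))) - subcurve P a' b' u)
        - ((1 - g) • (seg (P a) (P b) (γ s₁) - P a') + g • (seg (P a) (P b) (γ s₂) - P b')) := by
    rw [hv]; simp only [seg]; module
  rw [key]
  have n₁ := norm_sub_le (seg (P a) (P b) (γ (s₁ + u * (s₂ - s₁))) - subcurve P a' b' u)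
    ((1 - g) • (seg (P a) (P b) (γ s₁) - P a') + g • (seg (P a) (P b) (γ s₂) - P b'))
  have n₂ := norm_add_le ((1 - g) • (seg (P a) (P b) (γ s₁) - P a'))
    (g • (seg (P a) (P b) (γ s₂) - P b'))
  rw [norm_smul, norm_smul, Real.norm_of_nonneg (sub_nonneg.2 hmem.2),
    Real.norm_of_nonneg hmem.1] at n₂
  have k₁ := mul_le_mul_of_nonneg_left e₁ (sub_nonneg.2 hmem.2)
  have k₂ := mul_le_mul_of_nonneg_left e₂ hmem.1
  linarith

/-- Properties of the scan indices `x_z` and `y_z`. -/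
theorem stmt7 {d : ℕ} (P : ℝ → Pt d) (hP : ContinuousOn P (Icc 0 1))
    (m : ℕ) (hm : 2 ≤ m) (t : ℕ → ℝ) (ht0 : t 1 = 0) (ht1 : t m = 1)
    (htmono : ∀ i, 1 ≤ i → i < m → t i < t (i + 1))
    (Δ : ℝ) (hΔ : 0 < Δ)
    (z : ℕ) (hz1 : 1 ≤ z) (hz2 : z < m) (xz yz : ℕ)
    (hxz : IsLeast {x | 1 ≤ x ∧ x ≤ z ∧ ∀ x', x ≤ x' → x' ≤ z →
      frechetDist (seg (P (t x')) (P (t z))) (subcurve P (t x') (t z)) ≤ 4 * Δ} xz)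
    (hyz : IsGreatest {y | z + 1 ≤ y ∧ y ≤ m ∧ ∀ y', z + 1 ≤ y' → y' ≤ y →
      frechetDist (seg (P (t (z+1))) (P (t y'))) (subcurve P (t (z+1)) (t y')) ≤ 4 * Δ} yz) :
    (∀ x, xz ≤ x → x ≤ z →
      frechetDist (seg (P (t x)) (P (t z))) (subcurve P (t x) (t z)) ≤ 4 * Δ) ∧
    (∀ y, z + 1 ≤ y → y ≤ yz →
      frechetDist (seg (P (t (z+1))) (P (t y))) (subcurve P (t (z+1)) (t y)) ≤ 4 * Δ) ∧
    (∀ x, 1 ≤ x → x < xz →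
      2 * Δ < frechetDist (seg (P (t x)) (P (t z))) (subcurve P (t x) (t z))) ∧
    (∀ y, yz < y → y ≤ m →
      2 * Δ < frechetDist (seg (P (t (z+1))) (P (t y))) (subcurve P (t (z+1)) (t y))) := by
  have hmono : ∀ i j, 1 ≤ i → i ≤ j → j ≤ m → t i ≤ t j := by
    intro i j hi hij
    induction j, hij using Nat.le_induction with
    | base => exact fun _ => le_rfl
    | succ k hk ih =>
      intro hkm
      exact (ih (by omega)).trans (htmono k (by omega) (by omega)).le
  have hlo : ∀ i, 1 ≤ i → i ≤ m → 0 ≤ t i := fun i hi him => ht0 ▸ hmono 1 i le_rfl hi him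
  have hhi : ∀ i, 1 ≤ i → i ≤ m → t i ≤ 1 := fun i hi him => ht1 ▸ hmono i m hi him le_rfl
  obtain ⟨⟨hx1, hx2, hx3⟩, hxmin⟩ := hxz
  obtain ⟨⟨hy1, hy2, hy3⟩, hymax⟩ := hyz
  refine ⟨hx3, hy3, fun x hx hxx => ?_, fun y hy hym => ?_⟩
  · by_contra! hcon
    refine absurd (hxmin ⟨hx, by omega, fun x' hxx' hx'z => ?_⟩) (not_le.2 hxx)
    have := frechetDist_shortcut_mono hP (hlo x hx (by omega)) (hmono x x' hx hxx' (by omega))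
      (hmono x' z (by omega) hx'z hz2.le) le_rfl (hhi z hz1 hz2.le) hcon
    linarith
  · by_contra! hcon
    refine absurd (hymax ⟨by omega, hym, fun y' hzy' hy'y => ?_⟩) (not_le.2 hy)
    have := frechetDist_shortcut_mono hP (hlo (z + 1) (by omega) (by omega)) le_rfl
      (hmono (z + 1) y' (by omega) hzy' (by omega)) (hmono y' y (by omega) hy'y hym)
      (hhi y (by omega) hym) hcon
    linarith
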